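/- Let (ϱ,ς) be a direction with ϱ > 0 and ϱ + ς < 0, let i ≥ 1 be an integer, and let R, G ∈ K[x,y] be (ϱ,ς)-homogeneous polynomials with v_{ϱ,ς}(R) > 0 and [G,R] = R^i. Then the second coordinate of en_{ϱ,ς}(G) is at most (i−1) times the second coordinate of en_{ϱ,ς}(R) plus 1; equivalently, deg_y(G) ≤ (i−1)·deg_y(R) + 1. -/

import Mathlib

open MvPolynomial

noncomputable section

variable {K : Type*} [Field K] [CharZero K]

/-- The support of `P` as a set of pairs `(i,j)` of exponents of `x^i y^j`. -/
def Supp (P : MvPolynomial (Fin 2) K) : Set (ℕ × ℕ) :=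
  {p | MvPolynomial.coeff (Finsupp.single 0 p.1 + Finsupp.single 1 p.2) P ≠ 0}

/-- The Jacobian bracket `[P,Q] = ∂ₓP ∂_yQ − ∂ₓQ ∂_yP`. -/
def Jb (P Q : MvPolynomial (Fin 2) K) : MvPolynomial (Fin 2) K :=
  pderiv 0 P * pderiv 1 Q - pderiv 0 Q * pderiv 1 P

/-- The `(ρ,σ)`-degree `v_{ρ,σ}(P)` (the maximum of `ρi+σj` on the support). -/
def wdeg (ρ σ : ℤ) (P : MvPolynomial (Fin 2) K) : ℤ :=
  sSup {d : ℤ | ∃ p ∈ Supp P, d = ρ * (p.1 : ℤ) + σ * (p.2 : ℤ)}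

/-- The support of the `(ρ,σ)`-leading form of `P`. -/
def LeadSupp (ρ σ : ℤ) (P : MvPolynomial (Fin 2) K) : Set (ℕ × ℕ) :=
  {p | p ∈ Supp P ∧ ρ * (p.1 : ℤ) + σ * (p.2 : ℤ) = wdeg ρ σ P}

/-- `P` is `(ρ,σ)`-homogeneous. -/
def IsHomog (ρ σ : ℤ) (P : MvPolynomial (Fin 2) K) : Prop :=
  ∀ p ∈ Supp P, ∀ q ∈ Supp P,
    ρ * (p.1 : ℤ) + σ * (p.2 : ℤ) = ρ * (q.1 : ℤ) + σ * (q.2 : ℤ)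

/-- `P` is a monomial: its support has at most one point. -/
def IsMonomial (P : MvPolynomial (Fin 2) K) : Prop := (Supp P).Subsingleton

/-- `e` is the point `en_{ρ,σ}(P)`: the point of the support of the leading form
with largest second coordinate. -/
def IsEn (ρ σ : ℤ) (P : MvPolynomial (Fin 2) K) (e : ℕ × ℕ) : Prop :=
  e ∈ LeadSupp ρ σ P ∧ ∀ q ∈ LeadSupp ρ σ P, q.2 ≤ e.2

/-- `e` is the point `st_{ρ,σ}(P)`: the point of the support of the leading form
with smallest second coordinate. -/
def IsSt (ρ σ : ℤ) (P : MvPolynomial (Fin 2) K) (e : ℕ × ℕ) : Prop :=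
  e ∈ LeadSupp ρ σ P ∧ ∀ q ∈ LeadSupp ρ σ P, e.2 ≤ q.2

/-!
Fix a monomial order and let `a` and `b` be the exponents of the leading monomials of `G` and `R`.
Since `x ∂ₓ` and `y ∂_y` multiply each monomial by one of its exponents, the coefficient of
`x y [G,R]` at `a + b` is the determinant of `a` and `b` times both leading coefficients. If the
determinant is nonzero, comparing leading monomials in `x y [G,R] = x y Rⁱ` gives
`a + b = i b + (1,1)`. Otherwise `a` and `b` are proportional, and so are the weights `g` and `r`
of `G` and `R`: `a_j r = b_j g`. Homogeneity of `[G,R] = Rⁱ` gives `g + r = i r + (w₀ + w₁)` with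
`w₀ + w₁ ≤ 0`, hence `(a_j + b_j) r = b_j (g + r) ≤ i b_j r`, and `r > 0` can be cancelled.
A lexicographic order turns `a_j` and `b_j` into degrees in one variable.
-/

open Finsupp (weight)
open scoped MonomialOrder

section Euler

variable {σ A : Type*} [CommSemiring A]

theorem coeff_X_mul_pderiv (j : σ) (P : MvPolynomial σ A) (a : σ →₀ ℕ) :
    coeff a (X j * pderiv j P) = a j * coeff a P := by
  induction P using MvPolynomial.induction_on' with
  | monomial u c =>
    classical
    rw [X_mul_pderiv_monomial, coeff_smul, coeff_monomial]
    split_ifs with h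
    · rw [h, nsmul_eq_mul]
    · rw [smul_zero, mul_zero]
  | add P Q hP hQ => rw [map_add, mul_add, coeff_add, hP, hQ, coeff_add, mul_add]

theorem degree_X_mul_pderiv_le (m : MonomialOrder σ) (j : σ) (P : MvPolynomial σ A) :
    m.degree (X j * pderiv j P) ≼[m] m.degree P := by
  refine m.degree_le_degree_of_support_subset fun a ha ↦ ?_
  rw [mem_support_iff, coeff_X_mul_pderiv] at ha
  exact mem_support_iff.mpr (right_ne_zero_of_mul ha)

theorem degree_X_mul_pderiv_mul_le (m : MonomialOrder σ) (j k : σ) (P Q : MvPolynomial σ A) :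
    m.degree (X j * pderiv j P * (X k * pderiv k Q)) ≼[m] m.degree P + m.degree Q := by
  refine m.degree_mul_le.trans ?_
  simpa only [map_add] using
    add_le_add (degree_X_mul_pderiv_le m j P) (degree_X_mul_pderiv_le m k Q)

theorem coeff_degree_add_X_mul_pderiv_mul (m : MonomialOrder σ) (j k : σ)
    (P Q : MvPolynomial σ A) :
    coeff (m.degree P + m.degree Q) (X j * pderiv j P * (X k * pderiv k Q)) =
      m.degree P j * m.degree Q k * (m.leadingCoeff P * m.leadingCoeff Q) := by
  rw [m.coeff_mul_of_add_of_degree_le (degree_X_mul_pderiv_le m j P)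
    (degree_X_mul_pderiv_le m k Q), coeff_X_mul_pderiv, coeff_X_mul_pderiv,
    MonomialOrder.leadingCoeff, MonomialOrder.leadingCoeff]
  ring

end Euler

section LexFirst

variable {σ : Type*} [LinearOrder σ] [OrderBot σ]

theorem apply_bot_le_of_toLex_le {a b : σ →₀ ℕ} (h : toLex a ≤ toLex b) : a ⊥ ≤ b ⊥ := by
  rcases h.eq_or_lt with hab | hab
  · rw [toLex_inj.mp hab]
  · obtain ⟨k, heq, hlt⟩ := Finsupp.Lex.lt_iff.mp hab
    rcases eq_bot_or_bot_lt k with rfl | hk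
    · exact hlt.le
    · exact (heq ⊥ hk).le

variable [WellFoundedGT σ]

/-- The lexicographic monomial order for which `X j` is the largest variable: the lexicographic
order of Mathlib, whose largest variable is `X ⊥`, transported along the transposition of `⊥`
and `j`. Its leading monomials have the largest possible exponent of `X j`. -/
def lexFirst (j : σ) : MonomialOrder σ where
  syn := (MonomialOrder.lex (σ := σ)).syn
  toSyn := (Finsupp.domCongr (Equiv.swap ⊥ j)).trans MonomialOrder.lex.toSyn
  toSyn_monotone a b h := by
    have hswap : Finsupp.domCongr (Equiv.swap ⊥ j) a ≤ Finsupp.domCongr (Equiv.swap ⊥ j) b :=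
      fun k ↦ by simpa using h (Equiv.swap ⊥ j k)
    exact MonomialOrder.lex.toSyn_monotone hswap

theorem apply_le_of_lexFirst_le {j : σ} {a b : σ →₀ ℕ} (h : a ≼[lexFirst j] b) : a j ≤ b j := by
  have hbot : Finsupp.domCongr (Equiv.swap ⊥ j) a ⊥ ≤ Finsupp.domCongr (Equiv.swap ⊥ j) b ⊥ :=
    apply_bot_le_of_toLex_le (MonomialOrder.lex_le_iff.mp h)
  simpa using hbot

theorem degree_lexFirst_apply {A : Type*} [CommSemiring A] (j : σ) (P : MvPolynomial σ A) :
    (lexFirst j).degree P j = degreeOf j P := by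
  apply le_antisymm
  · rcases eq_or_ne P 0 with rfl | hP
    · simp
    · exact monomial_le_degreeOf j ((lexFirst j).degree_mem_support hP)
  · exact degreeOf_le_iff.mpr fun a ha ↦ apply_le_of_lexFirst_le ((lexFirst j).le_degree ha)

end LexFirst

section Bracket

variable {F : Type*} [Field F]

theorem X_mul_X_mul_Jb (P Q : MvPolynomial (Fin 2) F) :
    X 0 * X 1 * Jb P Q =
      X 0 * pderiv 0 P * (X 1 * pderiv 1 Q) - X 1 * pderiv 1 P * (X 0 * pderiv 0 Q) := by
  rw [Jb]
  ring

theorem degree_X_mul_X_mul_Jb (m : MonomialOrder (Fin 2)) {P Q : MvPolynomial (Fin 2) F}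
    (hP : P ≠ 0) (hQ : Q ≠ 0)
    (hdet : (m.degree P 0 * m.degree Q 1 : F) ≠ m.degree P 1 * m.degree Q 0) :
    m.degree (X 0 * X 1 * Jb P Q) = m.degree P + m.degree Q := by
  rw [X_mul_X_mul_Jb]
  apply m.toSyn.injective
  apply le_antisymm
  · exact m.degree_sub_le.trans
      (sup_le (degree_X_mul_pderiv_mul_le m 0 1 P Q) (degree_X_mul_pderiv_mul_le m 1 0 P Q))
  · apply m.le_degree
    rw [mem_support_iff, coeff_sub, coeff_degree_add_X_mul_pderiv_mul,
      coeff_degree_add_X_mul_pderiv_mul, ← sub_mul]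
    exact mul_ne_zero (sub_ne_zero.mpr hdet)
      (mul_ne_zero (m.leadingCoeff_ne_zero_iff.mpr hP) (m.leadingCoeff_ne_zero_iff.mpr hQ))

theorem isWeightedHomogeneous_Jb {M : Type*} [AddCommGroup M] {w : Fin 2 → M} {p q : M}
    {P Q : MvPolynomial (Fin 2) F} (hP : IsWeightedHomogeneous w P p)
    (hQ : IsWeightedHomogeneous w Q q) :
    IsWeightedHomogeneous w (Jb P Q) (p + q - (w 0 + w 1)) := by
  have hderiv {N : MvPolynomial (Fin 2) F} {n : M} (hN : IsWeightedHomogeneous w N n)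
      (j : Fin 2) : IsWeightedHomogeneous w (pderiv j N) (n - w j) :=
    hN.pderiv (sub_add_cancel n (w j))
  have h01 := (hderiv hP 0).mul (hderiv hQ 1)
  have h10 := (hderiv hQ 0).mul (hderiv hP 1)
  rw [show p - w 0 + (q - w 1) = p + q - (w 0 + w 1) by abel] at h01
  rw [show q - w 0 + (p - w 1) = p + q - (w 0 + w 1) by abel] at h10
  exact h01.sub h10

end Bracket

theorem smul_weight_eq_smul_weight {M : Type*} [AddCommMonoid M] (w : Fin 2 → M)
    {a b : Fin 2 →₀ ℕ} (h : a 0 * b 1 = a 1 * b 0) (j : Fin 2) :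
    a j • weight w b = b j • weight w a := by
  fin_cases j <;>
    simp only [Fin.zero_eta, Fin.mk_one, Finsupp.weight_eq_sum, Fin.sum_univ_two,
      smul_add, smul_smul, h, mul_comm (b _) (a _)]

theorem degree_smul_eq_degree_smul {A M : Type*} [CommSemiring A] [AddCommMonoid M]
    (m : MonomialOrder (Fin 2)) {w : Fin 2 → M} {p q : M} {P Q : MvPolynomial (Fin 2) A}
    (hP0 : P ≠ 0) (hQ0 : Q ≠ 0) (hP : IsWeightedHomogeneous w P p)
    (hQ : IsWeightedHomogeneous w Q q)
    (hdet : m.degree P 0 * m.degree Q 1 = m.degree P 1 * m.degree Q 0) (j : Fin 2) :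
    m.degree P j • q = m.degree Q j • p := by
  rw [← hQ (m.coeff_degree_ne_zero_iff.mpr hQ0), ← hP (m.coeff_degree_ne_zero_iff.mpr hP0)]
  exact smul_weight_eq_smul_weight w hdet j

section BracketPower

variable {F M : Type*} [Field F] [AddCommGroup M] {w : Fin 2 → M} {r g : M} {i : ℕ}
  {R G : MvPolynomial (Fin 2) F}

theorem ne_zero_of_Jb_eq_pow (hR0 : R ≠ 0) (hJb : Jb G R = R ^ i) : G ≠ 0 := by
  rintro rfl
  exact pow_ne_zero i hR0 (by simp [← hJb, Jb])

theorem add_eq_of_Jb_eq_pow (hR0 : R ≠ 0) (hR : IsWeightedHomogeneous w R r)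
    (hG : IsWeightedHomogeneous w G g) (hJb : Jb G R = R ^ i) :
    g + r = i • r + (w 0 + w 1) := by
  rw [← sub_eq_iff_eq_add]
  exact (hJb ▸ isWeightedHomogeneous_Jb hG hR).inj_right (pow_ne_zero i hR0) (hR.pow i)

theorem degree_add_degree_eq_of_Jb_eq_pow (m : MonomialOrder (Fin 2)) (hR0 : R ≠ 0)
    (hJb : Jb G R = R ^ i)
    (hdet : (m.degree G 0 * m.degree R 1 : F) ≠ m.degree G 1 * m.degree R 0) :
    m.degree G + m.degree R = i • m.degree R + (Finsupp.single 0 1 + Finsupp.single 1 1) := by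
  have hG0 := ne_zero_of_Jb_eq_pow hR0 hJb
  rw [← degree_X_mul_X_mul_Jb m hG0 hR0 hdet, hJb,
    m.degree_mul (mul_ne_zero (X_ne_zero _) (X_ne_zero _)) (pow_ne_zero i hR0),
    m.degree_mul (X_ne_zero _) (X_ne_zero _), m.degree_X, m.degree_X, m.degree_pow, add_comm]

variable [CharZero F] [PartialOrder M] [IsOrderedAddMonoid M]

theorem degree_add_degree_le_of_Jb_eq_pow (m : MonomialOrder (Fin 2)) (hw : w 0 + w 1 ≤ 0)
    (hr : 0 < r) (hR0 : R ≠ 0) (hR : IsWeightedHomogeneous w R r)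
    (hG : IsWeightedHomogeneous w G g) (hJb : Jb G R = R ^ i) (j : Fin 2) :
    m.degree G j + m.degree R j ≤ i * m.degree R j + 1 := by
  by_cases hdet : m.degree G 0 * m.degree R 1 = m.degree G 1 * m.degree R 0
  · have hG0 := ne_zero_of_Jb_eq_pow hR0 hJb
    have hsmul : (m.degree G j + m.degree R j) • r ≤ (i * m.degree R j) • r :=
      calc (m.degree G j + m.degree R j) • r
        _ = m.degree R j • (g + r) := by
          rw [add_smul, degree_smul_eq_degree_smul m hG0 hR0 hG hR hdet, smul_add]
        _ ≤ m.degree R j • i • r := by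
          rw [add_eq_of_Jb_eq_pow hR0 hR hG hJb]
          exact nsmul_le_nsmul_right (add_le_of_nonpos_right hw) _
        _ = (i * m.degree R j) • r := by rw [smul_smul, mul_comm]
    exact ((nsmul_left_strictMono hr).le_iff_le.mp hsmul).trans (Nat.le_succ _)
  · have hone : (Finsupp.single 0 1 + Finsupp.single 1 1 : Fin 2 →₀ ℕ) j = 1 := by
      fin_cases j <;> simp
    rw [← Finsupp.add_apply, degree_add_degree_eq_of_Jb_eq_pow m hR0 hJb (mod_cast hdet),
      Finsupp.add_apply, hone, Finsupp.smul_apply, smul_eq_mul]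

theorem stmt9_general (j : Fin 2) (hw : w 0 + w 1 ≤ 0) (hr : 0 < r) (hR0 : R ≠ 0)
    (hR : IsWeightedHomogeneous w R r) (hG : IsWeightedHomogeneous w G g)
    (hJb : Jb G R = R ^ i) :
    degreeOf j G + degreeOf j R ≤ i * degreeOf j R + 1 := by
  simpa only [degree_lexFirst_apply] using
    degree_add_degree_le_of_Jb_eq_pow (lexFirst j) hw hr hR0 hR hG hJb j

end BracketPower

section Direction

variable {F : Type*} [Field F] {ρ σ : ℤ} {P : MvPolynomial (Fin 2) F}

theorem mk_mem_Supp_iff {a : Fin 2 →₀ ℕ} : (a 0, a 1) ∈ Supp P ↔ a ∈ P.support := by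
  have ha : Finsupp.single 0 (a 0) + Finsupp.single 1 (a 1) = a := by
    ext j
    fin_cases j <;> simp
  rw [mem_support_iff, Supp, Set.mem_ofPred_eq, ha]

theorem IsHomog.wdeg_eq (hP : IsHomog ρ σ P) {p : ℕ × ℕ} (hp : p ∈ Supp P) :
    wdeg ρ σ P = ρ * p.1 + σ * p.2 := by
  have hset : {d : ℤ | ∃ q ∈ Supp P, d = ρ * q.1 + σ * q.2} = {ρ * p.1 + σ * p.2} := by
    ext d
    constructor
    · rintro ⟨q, hq, rfl⟩
      exact hP q hq p hp
    · rintro rfl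
      exact ⟨p, hp, rfl⟩
  rw [wdeg, hset, csSup_singleton]

theorem IsHomog.isWeightedHomogeneous (hP : IsHomog ρ σ P) :
    IsWeightedHomogeneous ![ρ, σ] P (wdeg ρ σ P) := by
  intro a ha
  rw [hP.wdeg_eq (mk_mem_Supp_iff.mpr (mem_support_iff.mpr ha)), Finsupp.weight_eq_sum,
    Fin.sum_univ_two]
  simp [mul_comm]

theorem IsEn.snd_eq_degreeOf {e : ℕ × ℕ} (he : IsEn ρ σ P e) (hP : IsHomog ρ σ P) :
    e.2 = degreeOf 1 P := by
  apply le_antisymm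
  · simpa using monomial_le_degreeOf 1 (mem_support_iff.mpr he.1.1)
  · exact degreeOf_le_iff.mpr fun a ha ↦
      have hmem := mk_mem_Supp_iff.mpr ha
      he.2 (a 0, a 1) ⟨hmem, (hP.wdeg_eq hmem).symm⟩

end Direction

/-- Lemma "maximo grado": if `[G,R]=R^i` with `v_{ϱ,ς}(R)>0`, then the second
coordinate of `en_{ϱ,ς}(G)` is at most `(i−1)` times that of `en_{ϱ,ς}(R)` plus 1. -/
theorem stmt9 (K : Type*) [Field K] [CharZero K]
    (ϱ ς : ℤ) (hgcd : Int.gcd ϱ ς = 1) (hϱ : 0 < ϱ) (hϱς : ϱ + ς < 0)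
    (i : ℕ) (hi : 1 ≤ i)
    (R G : MvPolynomial (Fin 2) K) (hR : R ≠ 0) (hG : G ≠ 0)
    (hhomR : IsHomog ϱ ς R) (hhomG : IsHomog ϱ ς G)
    (hu : 0 < wdeg ϱ ς R) (hbr : Jb G R = R ^ i)
    (eG eR : ℕ × ℕ) (henG : IsEn ϱ ς G eG) (henR : IsEn ϱ ς R eR) :
    eG.2 ≤ (i - 1) * eR.2 + 1 := by
  have hle : degreeOf 1 G + degreeOf 1 R ≤ i * degreeOf 1 R + 1 :=
    stmt9_general 1 hϱς.le hu hR hhomR.isWeightedHomogeneous hhomG.isWeightedHomogeneous hbr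
  obtain ⟨n, rfl⟩ := Nat.exists_eq_add_of_le' hi
  rw [henG.snd_eq_degreeOf hhomG, henR.snd_eq_degreeOf hhomR, Nat.add_sub_cancel]
  linarith

end
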